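/- Let X be a finite set and let C and T be partitions of X. Then the two one-sided expected mutual informations under the permutation model coincide: the uniform average of I(C′, T) over C′ ∈ perm(C) equals the uniform average of I(C, T′) over T′ ∈ perm(T). -/

import Mathlib

open Finset Real

variable {X : Type*} [Fintype X] [DecidableEq X]

/-- A finite family of finsets of `X` is a partition of `X` if its blocks are
nonempty, pairwise disjoint, and cover `X`. -/
def IsPartition (P : Finset (Finset X)) : Prop :=
  (∀ B ∈ P, B.Nonempty) ∧
  (∀ B ∈ P, ∀ D ∈ P, B ≠ D → Disjoint B D) ∧
  (∀ x : X, ∃ B ∈ P, x ∈ B)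

instance : DecidablePred (IsPartition (X := X)) := fun _ => by
  unfold IsPartition; infer_instance

/-- The shape of a partition: the multiset of its block sizes. -/
def shape (P : Finset (Finset X)) : Multiset ℕ := P.val.map Finset.card

/-- The image `σ·P` of a partition under a permutation `σ` of `X`. -/
def pmap (σ : X ≃ X) (P : Finset (Finset X)) : Finset (Finset X) :=
  P.image (fun B => B.image σ)

/-- Entropy of a partition: `H(C) = -∑_{B ∈ C} (|B|/N) log (|B|/N)`. -/
noncomputable def entropy (C : Finset (Finset X)) : ℝ :=
  -∑ B ∈ C, ((B.card : ℝ) / (Fintype.card X : ℝ)) *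
    Real.log ((B.card : ℝ) / (Fintype.card X : ℝ))

/-- Mutual information of two partitions:
`I(C,T) = ∑_{B ∈ C} ∑_{D ∈ T} (|B∩D|/N) log (N |B∩D| / (|B| |D|))`
(summands with `B ∩ D = ∅` vanish since the first factor is `0`). -/
noncomputable def MI (C T : Finset (Finset X)) : ℝ :=
  ∑ B ∈ C, ∑ D ∈ T, (((B ∩ D).card : ℝ) / (Fintype.card X : ℝ)) *
    Real.log ((Fintype.card X : ℝ) * ((B ∩ D).card : ℝ) / ((B.card : ℝ) * (D.card : ℝ)))

/-- The permutation random model `perm(C)`: all partitions of `X` with the same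
shape as `C`. -/
def permModel (C : Finset (Finset X)) : Finset (Finset (Finset X)) :=
  Finset.univ.filter (fun P => IsPartition P ∧ shape P = shape C)

/-- The all-partitions random model `all(X)`: all partitions of `X`. -/
def allModel (X : Type*) [Fintype X] [DecidableEq X] : Finset (Finset (Finset X)) :=
  Finset.univ.filter (fun P => IsPartition P)

/-- Uniform average of `f` over a finite set `s`. -/
noncomputable def avg {α : Type*} (s : Finset α) (f : α → ℝ) : ℝ :=
  (∑ a ∈ s, f a) / s.card

/-!
Partitions of the same shape are exactly the translates of one another under permutations of `X`
(match blocks of equal size, then their points), so `permModel C` and `permModel T` are orbits of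
`Perm X`. Mutual information does not change when both partitions are moved by one permutation,
hence its average over an orbit in one argument is the same at every point of the orbit of the
other argument. Both one-sided averages are therefore equal to the double average over the two
orbits.
-/

open scoped BigOperators Pointwise

theorem exists_equiv_of_map_univ_eq {α β γ : Type*} [Fintype α] [Fintype β] {f : α → γ} {g : β → γ}
    (h : univ.val.map f = univ.val.map g) : ∃ e : α ≃ β, ∀ a, g (e a) = f a := by
  classical
  have hfiber (c : γ) : Nonempty ({a // f a = c} ≃ {b // g b = c}) := by
    refine Fintype.card_eq.mp ?_
    have hcount := congrArg (Multiset.count c) h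
    simpa only [Multiset.count_map, ← filter_val, card_val, ← Fintype.card_subtype,
      eq_comm (a := c)] using hcount
  exact ⟨Equiv.ofFiberEquiv fun c => (hfiber c).some, Equiv.ofFiberEquiv_map _⟩

section Orbit

open MulAction

variable {G α β M : Type*} [Group G] [MulAction G α] [MulAction G β]
  [AddCommMonoid M] [Module ℚ≥0 M] {f : α → β → M} {s : Finset α} {t : Finset β} {a : α} {b : β}

theorem expect_apply_smul_of_invariant (hf : ∀ (g : G) x y, f (g • x) (g • y) = f x y)
    (hs : ∀ (g : G) x, g • x ∈ s ↔ x ∈ s) (g : G) (y : β) :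
    𝔼 x ∈ s, f x (g • y) = 𝔼 x ∈ s, f x y :=
  (expect_equiv (toPerm g) (fun x => (hs g x).symm) fun x _ => (hf g x y).symm).symm

theorem expect_orbit_expect_of_invariant (hf : ∀ (g : G) x y, f (g • x) (g • y) = f x y)
    (hs : ∀ (g : G) x, g • x ∈ s ↔ x ∈ s) (ht : ∀ y, y ∈ t ↔ y ∈ orbit G b) :
    𝔼 y ∈ t, 𝔼 x ∈ s, f x y = 𝔼 x ∈ s, f x b := by
  have hconst : ∀ y ∈ t, 𝔼 x ∈ s, f x y = 𝔼 x ∈ s, f x b := by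
    intro y hy
    obtain ⟨g, rfl⟩ := (ht y).mp hy
    exact expect_apply_smul_of_invariant hf hs g b
  rw [expect_congr rfl hconst, expect_const ⟨b, (ht b).mpr (mem_orbit_self b)⟩]

theorem expect_orbit_left_eq_right (hf : ∀ (g : G) x y, f (g • x) (g • y) = f x y)
    (hs : ∀ x, x ∈ s ↔ x ∈ orbit G a) (ht : ∀ y, y ∈ t ↔ y ∈ orbit G b) :
    𝔼 x ∈ s, f x b = 𝔼 y ∈ t, f a y := by
  have hs_smul (g : G) (x : α) : g • x ∈ s ↔ x ∈ s := by simp only [hs, ← orbit_eq_iff, orbit_smul]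
  have ht_smul (g : G) (y : β) : g • y ∈ t ↔ y ∈ t := by simp only [ht, ← orbit_eq_iff, orbit_smul]
  calc 𝔼 x ∈ s, f x b
    _ = 𝔼 y ∈ t, 𝔼 x ∈ s, f x y := (expect_orbit_expect_of_invariant hf hs_smul ht).symm
    _ = 𝔼 x ∈ s, 𝔼 y ∈ t, f x y := expect_comm t s fun y x => f x y
    _ = 𝔼 y ∈ t, f a y :=
      expect_orbit_expect_of_invariant (fun g y x => hf g x y) ht_smul hs

end Orbit

section Blocks

omit [Fintype X] [DecidableEq X]

variable {P Q : Finset (Finset X)}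

theorem exists_blocks_equiv_of_shape_eq (h : shape P = shape Q) :
    ∃ e : P ≃ Q, ∀ B, #(e B).1 = #B.1 := by
  refine exists_equiv_of_map_univ_eq (f := fun B : P => #B.1) (g := fun D : Q => #D.1) ?_
  calc univ.val.map (fun B : P => #B.1)
    _ = shape P := Multiset.attach_map_val' P.val card
    _ = shape Q := h
    _ = univ.val.map (fun D : Q => #D.1) := (Multiset.attach_map_val' Q.val card).symm

theorem IsPartition.bijective_sigma_coe (hP : IsPartition P) :
    Function.Bijective fun p : Σ B : P, B.1 => (p.2 : X) := by
  obtain ⟨-, hdisj, hcover⟩ := hP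
  refine ⟨?_, fun x => ?_⟩
  · rintro ⟨⟨B, hB⟩, x, hxB⟩ ⟨⟨D, hD⟩, y, hyD⟩ (rfl : x = y)
    obtain rfl : B = D := by
      by_contra hBD
      exact disjoint_left.mp (hdisj B hB D hD hBD) hxB hyD
    rfl
  · obtain ⟨B, hB, hx⟩ := hcover x
    exact ⟨⟨⟨B, hB⟩, x, hx⟩, rfl⟩

end Blocks

section Translate

omit [Fintype X]

variable {G : Type*} [Group G] [MulAction G X] {P : Finset (Finset X)}

theorem IsPartition.smul (hP : IsPartition P) (g : G) : IsPartition (g • P) := by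
  obtain ⟨hne, hdisj, hcover⟩ := hP
  refine ⟨?_, ?_, fun x => ?_⟩
  · rintro _ hgB
    obtain ⟨B, hB, rfl⟩ := mem_smul_finset.mp hgB
    exact (hne B hB).smul_finset
  · rintro _ hgB _ hgD hBD
    obtain ⟨B, hB, rfl⟩ := mem_smul_finset.mp hgB
    obtain ⟨D, hD, rfl⟩ := mem_smul_finset.mp hgD
    exact (disjoint_image (MulAction.injective g)).mpr (hdisj B hB D hD (ne_of_apply_ne _ hBD))
  · obtain ⟨B, hB, hx⟩ := hcover (g⁻¹ • x)
    exact ⟨g • B, smul_mem_smul_finset hB, inv_smul_mem_iff.mp hx⟩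

theorem shape_smul (g : G) (P : Finset (Finset X)) : shape (g • P) = shape P := by
  have hval : (g • P).val = P.val.map (g • ·) := image_val_of_injOn (MulAction.injective g).injOn
  simp only [shape, hval, Multiset.map_map, Function.comp_def, card_smul_finset]

theorem IsPartition.exists_perm_smul_eq {Q : Finset (Finset X)} (hP : IsPartition P)
    (hQ : IsPartition Q) (h : shape P = shape Q) : ∃ σ : Equiv.Perm X, σ • P = Q := by
  obtain ⟨e, he⟩ := exists_blocks_equiv_of_shape_eq h
  let φ := Equiv.ofBijective _ hP.bijective_sigma_coe
  let ψ := Equiv.ofBijective _ hQ.bijective_sigma_coe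
  let σ : Equiv.Perm X :=
    φ.symm.trans ((e.sigmaCongr fun B => equivOfCardEq (he B).symm).trans ψ)
  have hσ_mem (B : P) (x : X) (hx : x ∈ B.1) : σ x ∈ (e B).1 := by
    have hφ : φ.symm x = ⟨B, x, hx⟩ := φ.symm_apply_eq.mpr rfl
    simp only [σ, Equiv.trans_apply, hφ]
    exact (equivOfCardEq (he B).symm ⟨x, hx⟩).2
  have hσ_block (B : P) : σ • B.1 = (e B).1 := by
    refine eq_of_subset_of_card_le (image_subset_iff.mpr (hσ_mem B)) ?_
    rw [card_smul_finset, he]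
  refine ⟨σ, eq_of_subset_of_card_le (image_subset_iff.mpr fun B hB => ?_) ?_⟩
  · exact hσ_block ⟨B, hB⟩ ▸ (e ⟨B, hB⟩).2
  · rw [card_smul_finset, ← Fintype.card_coe P, ← Fintype.card_coe Q, Fintype.card_congr e]

end Translate

theorem MI_smul_smul {G : Type*} [Group G] [MulAction G X] (g : G) (C T : Finset (Finset X)) :
    MI (g • C) (g • T) = MI C T := by
  have sum_smul (P : Finset (Finset X)) (φ : Finset X → ℝ) :
      ∑ B ∈ g • P, φ B = ∑ B ∈ P, φ (g • B) := sum_image (MulAction.injective g).injOn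
  simp only [MI, sum_smul, ← smul_finset_inter, card_smul_finset]

theorem IsPartition.mem_permModel_iff_mem_orbit {C P : Finset (Finset X)} (hC : IsPartition C) :
    P ∈ permModel C ↔ P ∈ MulAction.orbit (Equiv.Perm X) C := by
  simp only [permModel, mem_filter_univ, MulAction.mem_orbit_iff]
  constructor
  · rintro ⟨hP, hshape⟩
    exact hC.exists_perm_smul_eq hP hshape.symm
  · rintro ⟨σ, rfl⟩
    exact ⟨hC.smul σ, shape_smul σ C⟩

theorem avg_eq_expect {α : Type*} (s : Finset α) (f : α → ℝ) : avg s f = 𝔼 a ∈ s, f a :=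
  (expect_eq_sum_div_card s f).symm

/-- Here `σ • P`, Mathlib's pointwise action on finsets of finsets, unfolds to `pmap σ P`. -/
theorem stmt5_general {f : Finset (Finset X) → Finset (Finset X) → ℝ}
    (hf : ∀ (σ : Equiv.Perm X) C T, f (σ • C) (σ • T) = f C T)
    {C T : Finset (Finset X)} (hC : IsPartition C) (hT : IsPartition T) :
    avg (permModel C) (fun Cp => f Cp T) = avg (permModel T) (fun Tp => f C Tp) := by
  rw [avg_eq_expect, avg_eq_expect]
  exact expect_orbit_left_eq_right hf (fun _ => hC.mem_permModel_iff_mem_orbit)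
    fun _ => hT.mem_permModel_iff_mem_orbit

theorem stmt5 (hN : 1 ≤ Fintype.card X)
    (C T : Finset (Finset X)) (hC : IsPartition C) (hT : IsPartition T) :
    avg (permModel C) (fun Cp => MI Cp T) = avg (permModel T) (fun Tp => MI C Tp) :=
  stmt5_general MI_smul_smul hC hT
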